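/- arXiv:1705.00339 — 2 statements merged into one kernel-verified Lean document; each statement's English description precedes it below -/
import Mathlib

section
/- Let K be a field of prime characteristic p, and let A be an associative unital K-algebra containing elements g, x and a scalar λ ∈ K such that gx − xg = λ(g − g^{p+1}). Then for every positive integer n: (g)(ad_R x)^n = λ^n · g·(1 − g^p)^n. In particular, (g)(ad_R x)^p = λ^p · g·(1 − g^{p²}). (Claim proved in Case (A4a)–(A4b) of the paper.) -/
/-!
`b ↦ ⁅b, x⁆` is a derivation of `A`, and the hypothesis says `⁅g, x⁆ = g * u` with
`u = λ • (1 - g ^ p)`. As `g` commutes with `⁅g, x⁆`, the derivation sends `g ^ p` to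
`p * g ^ (p - 1) * ⁅g, x⁆ = 0`, hence it kills `u`, and each application of it to `g` just
contributes one more factor `u`. For `p` prime, `(1 - g ^ p) ^ p = 1 - g ^ (p ^ 2)` by Frobenius.
-/

section Ring

variable {A : Type*} [Ring A] {a b u x : A}

theorem mul_lie_eq_mul_lie_add_lie_mul (a b x : A) : ⁅a * b, x⁆ = a * ⁅b, x⁆ + ⁅a, x⁆ * b := by
  simp only [Ring.lie_def]
  noncomm_ring

theorem pow_lie_of_commute (h : Commute a ⁅a, x⁆) (n : ℕ) :
    ⁅a ^ n, x⁆ = n • (a ^ (n - 1) * ⁅a, x⁆) := by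
  induction n with
  | zero => simp [Ring.lie_def]
  | succ n ih =>
    have hlast : ⁅a ^ n, x⁆ * a = n • (a ^ n * ⁅a, x⁆) := by
      rcases n with _ | n
      · simp [Ring.lie_def]
      · rw [ih, smul_mul_assoc, mul_assoc, ← h.eq, ← mul_assoc, Nat.add_sub_cancel, ← pow_succ]
    rw [pow_succ, mul_lie_eq_mul_lie_add_lie_mul, hlast, Nat.add_sub_cancel, succ_nsmul']

theorem commute_pow_of_natCast_eq_zero {n : ℕ} (hn : (n : A) = 0) (h : Commute a ⁅a, x⁆) :
    Commute (a ^ n) x := by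
  rw [commute_iff_lie_eq, pow_lie_of_commute h, nsmul_eq_mul, hn, zero_mul]

theorem iterate_lie_eq_mul_pow (ha : ⁅a, x⁆ = a * u) (hu : Commute u x) (n : ℕ) :
    (fun b => ⁅b, x⁆)^[n] a = a * u ^ n := by
  induction n with
  | zero => simp
  | succ n ih =>
    have hun : ⁅u ^ n, x⁆ = 0 := (hu.pow_left n).lie_eq
    rw [Function.iterate_succ_apply', ih, mul_lie_eq_mul_lie_add_lie_mul, hun, mul_zero, zero_add,
      ha, mul_assoc, ← pow_succ']

theorem sub_pow_prime_of_natCast_eq_zero {p : ℕ} (hp : p.Prime) (hpA : (p : A) = 0)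
    (h : Commute a b) : (a - b) ^ p = a ^ p - b ^ p := by
  obtain ⟨r, hr⟩ := (h.sub_left (Commute.refl b)).exists_add_pow_prime_eq hp
  simpa [hpA, eq_sub_iff_add_eq] using hr.symm

end Ring

theorem case_A4_claim_general {M A : Type*} [Ring A] [Monoid M] [MulAction M A]
    [IsScalarTower M A A] [SMulCommClass M A A] {p : ℕ} (hpA : (p : A) = 0) {g x : A} {c : M}
    (h : g * x - x * g = c • (g - g ^ (p + 1))) :
    (∀ n : ℕ, (fun b => b * x - x * b)^[n] g = c ^ n • (g * (1 - g ^ p) ^ n)) ∧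
    (p.Prime → (fun b => b * x - x * b)^[p] g = c ^ p • (g * (1 - g ^ (p ^ 2)))) := by
  have hgx : ⁅g, x⁆ = g * c • (1 - g ^ p) := by
    rw [Ring.lie_def, h, mul_smul_comm, mul_sub, mul_one, ← pow_succ']
  have hg : Commute g ⁅g, x⁆ := by
    rw [Ring.lie_def, h]
    exact ((Commute.refl g).sub_right (Commute.self_pow g (p + 1))).smul_right c
  have hu : Commute (c • (1 - g ^ p)) x :=
    ((Commute.one_left x).sub_left (commute_pow_of_natCast_eq_zero hpA hg)).smul_left c
  have hiter (n : ℕ) : (fun b => b * x - x * b)^[n] g = c ^ n • (g * (1 - g ^ p) ^ n) := by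
    rw [← mul_smul_comm, ← smul_pow]
    exact iterate_lie_eq_mul_pow hgx hu n
  refine ⟨hiter, fun hp => ?_⟩
  rw [hiter, sub_pow_prime_of_natCast_eq_zero hp hpA (Commute.one_left _), one_pow, ← pow_mul, sq]

/-- Claim proved in Cases (A4a)–(A4b): in characteristic `p`, if
`g * x - x * g = λ • (g - g^(p+1))`, then `(g)(ad_R x)^n = λ^n • (g * (1 - g^p)^n)` for
every `n ≥ 1`; in particular `(g)(ad_R x)^p = λ^p • (g * (1 - g^(p²)))`. -/
theorem case_A4_claim {K A : Type*} (p : ℕ) [Fact p.Prime] [Field K] [CharP K p]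
    [Ring A] [Algebra K A] (g x : A) (lam : K)
    (h : g * x - x * g = lam • (g - g ^ (p + 1))) :
    (∀ n : ℕ, 0 < n →
      (fun b => b * x - x * b)^[n] g = lam ^ n • (g * ((1 : A) - g ^ p) ^ n)) ∧
    (fun b => b * x - x * b)^[p] g = lam ^ p • (g * ((1 : A) - g ^ (p ^ 2))) := by
  have hpA : (p : A) = 0 := by rw [← map_natCast (algebraMap K A), CharP.cast_eq_zero, map_zero]
  exact (case_A4_claim_general hpA h).imp (fun hiter n _ => hiter n) (fun hprime => hprime Fact.out)
end

section
/- Let K be a field of prime characteristic p and H a bialgebra over K. Let g ∈ H be a grouplike element with g^m = 1 for some positive integer m, let μ be a natural number and λ ∈ K, and let y ∈ H satisfy Δ(y) = y ⊗ 1 + g^μ ⊗ y and gy − yg = λ(g − g^{μ+1}). Then Δ(y^p − (λμ)^{p−1}·y) = (y^p − (λμ)^{p−1}·y) ⊗ 1 + g^{pμ} ⊗ (y^p − (λμ)^{p−1}·y), where μ is interpreted in K; that is, y^p − (λμ)^{p−1}·y is (1, g^{pμ})-skew-primitive. (Claim proved in Case (C4) of the paper.) -/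
open scoped TensorProduct

/-!
Write `(x)_n = x (x - c) ⋯ (x - (n - 1) c)`. If `h y = (y + c (1 - h)) h` and `z` commutes with
`h` and `y`, then the Vandermonde identity survives in the form
`(y + h z)_n = ∑ (n choose i) (y)_i h^(n - i) (z)_(n - i)`, by Pascal's rule. In characteristic `p`
the middle binomial coefficients of `(y + h z)_p` vanish and `(x)_p = x ^ p - c ^ (p - 1) x`.
In the theorem `h = g ^ μ ⊗ 1` and `c = λ μ`; the arguments are `y ⊗ 1` and `z = 1 ⊗ y`.
-/

open Finset.HasAntidiagonal Polynomial

section FallingFactorial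

section Ring

variable {R : Type*} [Ring R]

lemma monic_descPochhammer_of_nontrivial [Nontrivial R] (n : ℕ) : (descPochhammer R n).Monic := by
  simpa [descPochhammer_map] using (monic_descPochhammer ℤ n).map (Int.castRingHom R)

lemma natDegree_X_pow_sub_X [Nontrivial R] {n : ℕ} (hn : 1 < n) :
    (X ^ n - X : R[X]).natDegree = n := by
  rw [natDegree_sub_eq_left_of_natDegree_lt (by simpa using hn), natDegree_X_pow]

lemma descPochhammer_eq_X_pow_sub_X (p : ℕ) [Fact p.Prime] [CharP R p] :
    descPochhammer R p = X ^ p - X := by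
  suffices h : descPochhammer (ZMod p) p = X ^ p - X by
    simpa [descPochhammer_map] using congrArg (map (ZMod.castHom dvd_rfl R)) h
  have hp : 1 < p := (Fact.out : p.Prime).one_lt
  have monic_left := monic_descPochhammer (ZMod p) p
  have monic_right : (X ^ p - X : (ZMod p)[X]).Monic :=
    monic_X_pow_sub (degree_X_le.trans_lt (by exact_mod_cast hp))
  have degree_left : (descPochhammer (ZMod p) p).degree = p := by
    rw [degree_eq_natDegree monic_left.ne_zero, descPochhammer_natDegree]
  have degree_right : (X ^ p - X : (ZMod p)[X]).degree = p := by
    rw [degree_eq_natDegree monic_right.ne_zero, natDegree_X_pow_sub_X hp]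
  refine eq_of_degree_sub_lt_of_eval_finset_eq Finset.univ ?_ fun a _ => ?_
  · rw [Finset.card_univ, ZMod.card, ← degree_left]
    exact degree_sub_lt_left (degree_left.trans degree_right.symm) monic_left.ne_zero
      (monic_left.leadingCoeff.trans monic_right.leadingCoeff.symm)
  · rw [← ZMod.natCast_zmod_val a, descPochhammer_eval_coe_nat_of_lt (ZMod.val_lt a)]
    simp

/-- The falling factorial `X (X - c) ⋯ (X - (n - 1) c)` with step `c`, encoded by scaling the roots
`0, …, n - 1` of `descPochhammer R n`. -/
noncomputable def scaledDescPochhammer (c : R) (n : ℕ) : R[X] :=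
  (descPochhammer R n).scaleRoots c

@[simp]
lemma scaledDescPochhammer_zero (c : R) : scaledDescPochhammer c 0 = 1 := by
  simp [scaledDescPochhammer]

end Ring

variable {R : Type*} [CommRing R]

lemma scaledDescPochhammer_succ (c : R) (n : ℕ) :
    scaledDescPochhammer c (n + 1) = scaledDescPochhammer c n * (X - C (n * c)) := by
  nontriviality R
  rw [scaledDescPochhammer, descPochhammer_succ_right, ← C_eq_natCast, mul_scaleRoots',
    X_sub_C_scaleRoots, scaledDescPochhammer]
  rw [(monic_descPochhammer_of_nontrivial n).leadingCoeff, leadingCoeff_X_sub_C, one_mul]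
  exact one_ne_zero

lemma scaledDescPochhammer_eq_X_pow_sub (p : ℕ) [Fact p.Prime] [CharP R p] (c : R) :
    scaledDescPochhammer c p = X ^ p - C (c ^ (p - 1)) * X := by
  have hp : 1 < p := (Fact.out : p.Prime).one_lt
  have : Nontrivial R := CharP.nontrivial_of_char_ne_one hp.ne'
  rw [scaledDescPochhammer, descPochhammer_eq_X_pow_sub_X]
  ext i
  rw [coeff_scaleRoots, natDegree_X_pow_sub_X hp]
  simp only [coeff_sub, coeff_X_pow, coeff_C_mul, coeff_X]
  rcases eq_or_ne i p with rfl | hip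
  · simp [hp.ne]
  · grind

end FallingFactorial

lemma semiconjBy_pow_add_nsmul {S : Type*} [Semiring S] {g y w : S}
    (hy : SemiconjBy g y (y + w)) (hw : Commute g w) (k : ℕ) :
    SemiconjBy (g ^ k) y (y + k • w) := by
  induction k with
  | zero => simp
  | succ k ih =>
    rw [pow_succ', succ_nsmul', ← add_assoc]
    exact (hy.add_right (hw.smul_right k)).mul_left ih

lemma commute_aeval_right {R S : Type*} [CommSemiring R] [Semiring S] [Algebra R S] {a b : S}
    (hab : Commute a b) (f : R[X]) : Commute a (aeval b f) :=
  Algebra.commute_of_mem_adjoin_singleton_of_commute (aeval_mem_adjoin_singleton R b) hab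

lemma sum_antidiagonal_prime_choose_nsmul {M : Type*} [AddCommMonoid M] {p : ℕ} (hp : p.Prime)
    (hM : ∀ x : M, p • x = 0) (f : ℕ → ℕ → M) :
    ∑ ij ∈ antidiagonal p, p.choose ij.1 • f ij.1 ij.2 = f p 0 + f 0 p := by
  have middle_eq_zero : ∑ i ∈ Finset.range (p - 1),
      p.choose (i + 1) • f (i + 1) (p - (i + 1)) = 0 := by
    refine Finset.sum_eq_zero fun i hi => ?_
    have hi' : i + 1 < p := by grind
    obtain ⟨k, hk⟩ := hp.dvd_choose_self i.succ_ne_zero hi'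
    rw [hk, mul_comm, mul_nsmul, hM]
  rw [Finset.Nat.sum_antidiagonal_eq_sum_range_succ_mk, Finset.sum_range_succ,
    ← Nat.sub_add_cancel hp.one_le, Finset.sum_range_succ', Nat.sub_add_cancel hp.one_le,
    middle_eq_zero]
  simp [add_comm]

section Vandermonde

variable {R S : Type*} [CommRing R] [Ring S] [Algebra R S] {c : R} {h y z : S}

/-- The product `(y)_i h^j (z)_j`, which `(i + j).choose i` multiplies in the expansion of
`(y + h z)_(i + j)`. The factors do not commute, so their order matters. -/
noncomputable def vandermondeTerm (c : R) (h y z : S) (i j : ℕ) : S :=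
  aeval y (scaledDescPochhammer c i) * h ^ j * aeval z (scaledDescPochhammer c j)

lemma vandermondeTerm_mul (hy : SemiconjBy h y (y + c • (1 - h))) (hzh : Commute z h)
    (hzy : Commute z y) (i j : ℕ) :
    vandermondeTerm c h y z i j * (y + h * z - algebraMap R S ((i + j : ℕ) * c)) =
      vandermondeTerm c h y z i (j + 1) + vandermondeTerm c h y z (i + 1) j := by
  have pow_mul_y : h ^ j * y = (y + j • c • (1 - h)) * h ^ j :=
    semiconjBy_pow_add_nsmul hy (((Commute.one_right h).sub_right (.refl h)).smul_right c) j
  simp only [vandermondeTerm, scaledDescPochhammer_succ, map_mul, map_sub, aeval_X, aeval_C]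
  have hyZ := commute_aeval_right hzy.symm (scaledDescPochhammer c j)
  have hhZ := commute_aeval_right hzh.symm (scaledDescPochhammer c j)
  set Y := aeval y (scaledDescPochhammer c i)
  set Z := aeval z (scaledDescPochhammer c j)
  have mul_y : Y * h ^ j * Z * y = Y * (y + j • c • (1 - h)) * h ^ j * Z := by
    rw [mul_assoc _ Z, ← hyZ.eq, mul_assoc Y, mul_assoc Y, ← mul_assoc _ y, pow_mul_y]
    simp only [mul_assoc]
  have mul_hz : Y * h ^ j * Z * (h * z) = Y * h ^ (j + 1) * Z * z := by
    rw [← mul_assoc, mul_assoc _ Z, ← hhZ.eq, pow_succ]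
    simp only [mul_assoc]
  rw [mul_sub, mul_add, mul_y, mul_hz]
  simp only [Algebra.algebraMap_eq_smul_one, mul_add, add_mul, mul_sub, sub_mul, mul_one,
    mul_smul_comm, smul_mul_assoc, pow_succ', mul_assoc, smul_sub, Nat.cast_add]
  module

theorem aeval_add_mul_scaledDescPochhammer (hy : SemiconjBy h y (y + c • (1 - h)))
    (hzh : Commute z h) (hzy : Commute z y) (n : ℕ) :
    aeval (y + h * z) (scaledDescPochhammer c n) =
      ∑ ij ∈ antidiagonal n, n.choose ij.1 • vandermondeTerm c h y z ij.1 ij.2 := by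
  induction n with
  | zero => simp [vandermondeTerm]
  | succ n ih =>
    rw [Finset.sum_antidiagonal_choose_succ_nsmul, scaledDescPochhammer_succ, map_mul, ih,
      Finset.sum_mul, ← Finset.sum_add_distrib]
    refine Finset.sum_congr rfl fun ⟨i, j⟩ hij => ?_
    obtain rfl : i + j = n := mem_antidiagonal.mp hij
    rw [Nat.choose_symm_add, ← smul_add, ← vandermondeTerm_mul hy hzh hzy, smul_mul_assoc,
      map_sub, aeval_X, aeval_C]

variable (p : ℕ) [Fact p.Prime] [CharP R p]

theorem add_mul_pow_sub_smul (hy : SemiconjBy h y (y + c • (1 - h)))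
    (hzh : Commute z h) (hzy : Commute z y) :
    (y + h * z) ^ p - c ^ (p - 1) • (y + h * z) =
      (y ^ p - c ^ (p - 1) • y) + h ^ p * (z ^ p - c ^ (p - 1) • z) := by
  have nsmul_eq_zero (x : S) : p • x = 0 := by
    rw [← Nat.cast_smul_eq_nsmul R, CharP.cast_eq_zero, zero_smul]
  have vandermonde := aeval_add_mul_scaledDescPochhammer hy hzh hzy p
  rw [sum_antidiagonal_prime_choose_nsmul Fact.out nsmul_eq_zero] at vandermonde
  simpa [vandermondeTerm, scaledDescPochhammer_eq_X_pow_sub, Algebra.smul_def] using vandermonde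

lemma tmul_one_add_tmul_pow_sub_smul {T : Type*} [Ring T] [Algebra R T]
    (hy : SemiconjBy h y (y + c • (1 - h))) (z : T) :
    (y ⊗ₜ[R] (1 : T) + h ⊗ₜ[R] z) ^ p - c ^ (p - 1) • (y ⊗ₜ[R] (1 : T) + h ⊗ₜ[R] z) =
      (y ^ p - c ^ (p - 1) • y) ⊗ₜ[R] (1 : T) + (h ^ p) ⊗ₜ[R] (z ^ p - c ^ (p - 1) • z) := by
  have semiconj : SemiconjBy (h ⊗ₜ[R] (1 : T)) (y ⊗ₜ[R] (1 : T))
      (y ⊗ₜ[R] (1 : T) + c • (1 - h ⊗ₜ[R] (1 : T))) := by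
    simpa [TensorProduct.add_tmul, TensorProduct.sub_tmul, ← TensorProduct.smul_tmul',
      Algebra.TensorProduct.one_def]
      using hy.map (Algebra.TensorProduct.includeLeft : S →ₐ[R] S ⊗[R] T)
  have := add_mul_pow_sub_smul p semiconj (z := (1 : S) ⊗ₜ[R] z)
    (by simp [Commute, SemiconjBy]) (by simp [Commute, SemiconjBy])
  simpa [TensorProduct.sub_tmul, TensorProduct.tmul_sub, TensorProduct.smul_tmul', mul_sub]
    using this

end Vandermonde

theorem case_C4_claim_general {K H : Type*} (p : ℕ) [Fact p.Prime] [CommRing K] [CharP K p]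
    [Ring H] [Bialgebra K H] (g y : H) (μ : ℕ) (lam : K)
    (hy : Coalgebra.comul (R := K) y = y ⊗ₜ[K] (1 : H) + (g ^ μ) ⊗ₜ[K] y)
    (hgy : g * y - y * g = lam • (g - g ^ (μ + 1))) :
    Coalgebra.comul (R := K) (y ^ p - (lam * (μ : K)) ^ (p - 1) • y) =
      (y ^ p - (lam * (μ : K)) ^ (p - 1) • y) ⊗ₜ[K] (1 : H) +
        (g ^ (p * μ)) ⊗ₜ[K] (y ^ p - (lam * (μ : K)) ^ (p - 1) • y) := by
  have semiconj_g : SemiconjBy g y (y + lam • (1 - g ^ μ)) := by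
    rw [SemiconjBy, add_mul, smul_mul_assoc, sub_mul, one_mul, ← pow_succ, ← hgy]
    abel
  have commute_g : Commute g (lam • (1 - g ^ μ)) :=
    ((Commute.one_right g).sub_right (.self_pow g μ)).smul_right lam
  have semiconj_pow : SemiconjBy (g ^ μ) y (y + (lam * (μ : K)) • (1 - g ^ μ)) := by
    rw [mul_comm, mul_smul, Nat.cast_smul_eq_nsmul]
    exact semiconjBy_pow_add_nsmul semiconj_g commute_g μ
  rw [map_sub, map_smul, Bialgebra.comul_pow, hy, tmul_one_add_tmul_pow_sub_smul p semiconj_pow,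
    ← pow_mul, mul_comm μ]

/-- Claim proved in Case (C4): if `g` is grouplike with `g ^ m = 1`,
`Δ(y) = y ⊗ 1 + g^μ ⊗ y` and `g * y - y * g = λ • (g - g^(μ+1))`, then
`y^p - (λμ)^(p-1) • y` is `(1, g^(pμ))`-skew-primitive. -/
theorem case_C4_claim {K H : Type*} (p : ℕ) [Fact p.Prime] [Field K] [CharP K p]
    [Ring H] [Bialgebra K H] (g y : H) (μ : ℕ) (lam : K)
    (m : ℕ) (hm : 0 < m) (hgm : g ^ m = 1)
    (hgc : Coalgebra.comul (R := K) g = g ⊗ₜ[K] g)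
    (hge : Coalgebra.counit (R := K) g = 1)
    (hy : Coalgebra.comul (R := K) y = y ⊗ₜ[K] (1 : H) + (g ^ μ) ⊗ₜ[K] y)
    (hgy : g * y - y * g = lam • (g - g ^ (μ + 1))) :
    Coalgebra.comul (R := K) (y ^ p - (lam * (μ : K)) ^ (p - 1) • y) =
      (y ^ p - (lam * (μ : K)) ^ (p - 1) • y) ⊗ₜ[K] (1 : H) +
        (g ^ (p * μ)) ⊗ₜ[K] (y ^ p - (lam * (μ : K)) ^ (p - 1) • y) := by
  exact case_C4_claim_general p g y μ lam hy hgy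
end
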